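/- Let P^{(1)},…,P^{(n)} be n probability distributions on X × Y (independently sampled, not necessarily identical), and draw from each P^{(j)} an i.i.d. sample S_{P^{(j)}} of m points, the n samples being mutually independent. Then with confidence at least 1 − δ, simultaneously for all f ∈ F: (1/n) Σ_{j=1}^n L_{P^{(j)}}(f) ≤ (1/n) Σ_{j=1}^n L̂_{P^{(j)}}(f) + 2·R_{mn}(F) + 3·√(ln(2/δ)/(2mn)). -/

import Mathlib

open MeasureTheory Real Filter

noncomputable section

/-- The output space `Y = {1, -1}`, as a subtype of the integers. -/
abbrev Ysp : Type := ({1, -1} : Set ℤ)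

/-- The risk `L_P(f) = E_{(x,y) ~ P}[ℓ(f(x), y)]` of a decision function `f`
under a distribution `P` on `X × Y`. -/
def risk {X : Type*} [MeasurableSpace X] (ℓ : Ysp → Ysp → ℝ)
    (P : Measure (X × Ysp)) (f : X → Ysp) : ℝ :=
  ∫ p, ℓ (f p.1) p.2 ∂P

/-- The population risk `L^μ(f) = E_{P ~ μ}[L_P(f)]` under a meta-distribution `μ`. -/
def metaRisk {X : Type*} [MeasurableSpace X] (ℓ : Ysp → Ysp → ℝ)
    (μ : Measure (Measure (X × Ysp))) (f : X → Ysp) : ℝ :=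
  ∫ P, risk ℓ P f ∂μ

/-- Interpret a boolean as a random sign in `{-1, +1}`. -/
def sgn (b : Bool) : ℝ := if b then 1 else -1

/-- Empirical Rademacher complexity of the class `F` on the sample `S`:
the expectation, over i.i.d. uniform random signs `σ`, of
`sup_{f ∈ F} (1/N) ∑ₖ σₖ ℓ(f(xₖ), yₖ)` where `N` is the sample size. -/
def rad {X : Type*} [MeasurableSpace X] (ℓ : Ysp → Ysp → ℝ) (F : Set (X → Ysp))
    {ι : Type*} [Fintype ι] [DecidableEq ι] (S : ι → X × Ysp) : ℝ :=
  (∑ σ : ι → Bool, ⨆ f ∈ F,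
      (Fintype.card ι : ℝ)⁻¹ * ∑ k, sgn (σ k) * ℓ (f (S k).1) (S k).2) /
    2 ^ Fintype.card ι

/-- Domain-level Rademacher average of `F` on the domains `P 0, …, P (n-1)`:
the expectation, over i.i.d. uniform random signs `σ`, of
`sup_{f ∈ F} (1/n) ∑ⱼ σⱼ L_{P⁽ʲ⁾}(f)`. -/
def radDom {X : Type*} [MeasurableSpace X] (ℓ : Ysp → Ysp → ℝ) (F : Set (X → Ysp))
    {n : ℕ} (P : Fin n → Measure (X × Ysp)) : ℝ :=
  (∑ σ : Fin n → Bool, ⨆ f ∈ F,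
      (n : ℝ)⁻¹ * ∑ j, sgn (σ j) * risk ℓ (P j) f) / 2 ^ n

/-!
McDiarmid's inequality is applied once, to the difference of the uniform deviation
`sup_f (E[φ_f] - average of φ_f over S)` and twice the empirical Rademacher complexity of `S`.
Changing one of the `N` sample points moves the first term by at most `1/N` and the second by at
most `2/N`, which is where the factor `3` comes from, and symmetrization with a ghost sample shows
that the difference has nonpositive mean. No union bound is needed, so that `ln(1/δ)` already
suffices. Symmetrization exchanges the sample and the ghost sample one coordinate at a time, so
the points have to be independent but need not be identically distributed.
-/

section McDiarmid

universe u

open ProbabilityTheory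

lemma hasSubgaussianMGF_sub_integral_of_abs_sub_le {α : Type*} [MeasurableSpace α] {μ : Measure α}
    [IsProbabilityMeasure μ] {X : α → ℝ} (hX : AEMeasurable X μ) {c : ℝ}
    (hc : ∀ x y, |X x - X y| ≤ c) :
    HasSubgaussianMGF (fun x ↦ X x - ∫ y, X y ∂μ) ((‖c‖₊ / 2) ^ 2) μ := by
  obtain ⟨x₀⟩ : Nonempty α := μ.nonempty_of_neZero
  have bddBelow : BddBelow (Set.range X) := by
    refine ⟨X x₀ - c, ?_⟩
    rintro _ ⟨y, rfl⟩
    linarith [(abs_le.1 (hc x₀ y)).2]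
  have mem_Icc (x : α) : X x ∈ Set.Icc (⨅ y, X y) ((⨅ y, X y) + c) := by
    have : Nonempty α := ⟨x₀⟩
    refine ⟨ciInf_le bddBelow x, ?_⟩
    have : X x - c ≤ ⨅ y, X y := le_ciInf fun y ↦ by linarith [(abs_le.1 (hc x y)).2]
    linarith
  simpa only [add_sub_cancel_left] using hasSubgaussianMGF_of_mem_Icc hX (ae_of_all _ mem_Icc)

lemma hasSubgaussianMGF_add_prod {α β : Type*} [MeasurableSpace α] [MeasurableSpace β]
    {μ : Measure α} {ν : Measure β} [SFinite μ] [SFinite ν] {X : α → ℝ} {Y : α × β → ℝ}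
    {cX cY : NNReal} (hX : HasSubgaussianMGF X cX μ) (hY_meas : AEStronglyMeasurable Y (μ.prod ν))
    (hY : ∀ a, HasSubgaussianMGF (fun b ↦ Y (a, b)) cY ν) :
    HasSubgaussianMGF (fun p ↦ X p.1 + Y p) (cX + cY) (μ.prod ν) := by
  have integral_section (t : ℝ) (a : α) :
      ∫ b, exp (t * (X a + Y (a, b))) ∂ν = exp (t * X a) * mgf (fun b ↦ Y (a, b)) ν t := by
    simp only [mul_add, exp_add, integral_const_mul, mgf]
  have integral_section_le (t : ℝ) (a : α) :
      ∫ b, exp (t * (X a + Y (a, b))) ∂ν ≤ exp (t * X a) * exp (cY * t ^ 2 / 2) := by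
    rw [integral_section]
    gcongr
    exact (hY a).mgf_le t
  have integrable_exp (t : ℝ) : Integrable (fun p ↦ exp (t * (X p.1 + Y p))) (μ.prod ν) := by
    have meas : AEStronglyMeasurable (fun p ↦ exp (t * (X p.1 + Y p))) (μ.prod ν) := by
      have := hX.aestronglyMeasurable.comp_fst (ν := ν)
      exact continuous_exp.comp_aestronglyMeasurable ((this.add hY_meas).const_mul t)
    refine (integrable_prod_iff meas).2 ⟨ae_of_all _ fun a ↦ ?_, ?_⟩
    · simpa only [mul_add, exp_add] using ((hY a).integrable_exp_mul t).const_mul (exp (t * X a))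
    · refine ((hX.integrable_exp_mul t).mul_const (exp (cY * t ^ 2 / 2))).mono'
        meas.norm.integral_prod_right' (ae_of_all _ fun a ↦ ?_)
      simp only [norm_eq_abs, abs_exp]
      rw [abs_of_nonneg (integral_nonneg fun _ ↦ (exp_pos _).le)]
      exact integral_section_le t a
  refine ⟨integrable_exp, fun t ↦ ?_⟩
  calc mgf (fun p ↦ X p.1 + Y p) (μ.prod ν) t
      = ∫ a, ∫ b, exp (t * (X a + Y (a, b))) ∂ν ∂μ := integral_prod _ (integrable_exp t)
    _ ≤ ∫ a, exp (t * X a) * exp (cY * t ^ 2 / 2) ∂μ :=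
        integral_mono (integrable_exp t).integral_prod_left
          ((hX.integrable_exp_mul t).mul_const _) (integral_section_le t)
    _ = mgf X μ t * exp (cY * t ^ 2 / 2) := integral_mul_const _ _
    _ ≤ exp (cX * t ^ 2 / 2) * exp (cY * t ^ 2 / 2) := by
        gcongr
        exact hX.mgf_le t
    _ = exp (↑(cX + cY) * t ^ 2 / 2) := by
        rw [← exp_add]
        push_cast
        ring_nf

lemma hasSubgaussianMGF_comp_of_measurePreserving {α β : Type*} [MeasurableSpace α]
    [MeasurableSpace β] {μ : Measure α} {ν : Measure β} {f : α → β} (hf : MeasurePreserving f μ ν)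
    {X : β → ℝ} {c : NNReal} (hX : HasSubgaussianMGF X c ν) : HasSubgaussianMGF (X ∘ f) c μ :=
  .of_map hf.aemeasurable (by rwa [hf.map_eq])

/-- The hypothesis of McDiarmid's inequality: changing only the `i`-th coordinate changes the value
of `g` by at most `c i`. -/
def HasBoundedDifferences {ι : Type*} {Z : ι → Type*} (g : (∀ i, Z i) → ℝ) (c : ι → ℝ) : Prop :=
  ∀ i S T, (∀ j ≠ i, S j = T j) → |g S - g T| ≤ c i

namespace HasBoundedDifferences

variable {ι : Type*} {Z : ι → Type*} {g g' : (∀ i, Z i) → ℝ} {c c' : ι → ℝ}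

lemma sub (hg : HasBoundedDifferences g c) (hg' : HasBoundedDifferences g' c') :
    HasBoundedDifferences (fun S ↦ g S - g' S) (fun i ↦ c i + c' i) := fun i S T hST ↦ by
  rw [sub_sub_sub_comm]
  exact (abs_sub _ _).trans (add_le_add (hg i S T hST) (hg' i S T hST))

lemma const_mul (r : ℝ) (hg : HasBoundedDifferences g c) :
    HasBoundedDifferences (fun S ↦ r * g S) (fun i ↦ |r| * c i) := fun i S T hST ↦ by
  rw [← mul_sub, abs_mul]
  exact mul_le_mul_of_nonneg_left (hg i S T hST) (abs_nonneg r)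

lemma comp_piCongrLeft {κ : Type*} (hg : HasBoundedDifferences g c) (e : κ ≃ ι) :
    HasBoundedDifferences (fun S ↦ g (Equiv.piCongrLeft Z e S)) (fun k ↦ c (e k)) := by
  refine fun k S T hST ↦ hg (e k) _ _ fun j hj ↦ ?_
  obtain ⟨k', rfl⟩ := e.surjective j
  simpa only [Equiv.piCongrLeft_apply_apply] using hST k' fun h ↦ hj (h ▸ rfl)

lemma abs_sub_le_sum [Fintype ι] (hg : HasBoundedDifferences g c) (S T : ∀ i, Z i) :
    |g S - g T| ≤ ∑ i, c i := by
  classical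
  suffices ∀ s : Finset ι, |g (s.piecewise S T) - g T| ≤ ∑ i ∈ s, c i by
    simpa using this Finset.univ
  intro s
  induction s using Finset.induction_on with
  | empty => simp
  | insert i s his ih =>
    rw [Finset.piecewise_insert, Finset.sum_insert his]
    exact (abs_sub_le _ _ _).trans
      (add_le_add (hg i _ _ fun j hj ↦ Function.update_of_ne hj _ _) ih)

lemma integrable_comp [Finite ι] [∀ i, MeasurableSpace (Z i)] {α : Type*} [MeasurableSpace α]
    {μ : Measure α} [IsFiniteMeasure μ] {f : α → ∀ i, Z i} (hg : HasBoundedDifferences g c)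
    (hg_meas : Measurable g) (hf : Measurable f) : Integrable (fun a ↦ g (f a)) μ := by
  cases nonempty_fintype ι
  rcases isEmpty_or_nonempty α with _ | ⟨⟨a₀⟩⟩
  · exact Integrable.of_isEmpty
  · refine .of_bound (hg_meas.comp hf).aestronglyMeasurable (|g (f a₀)| + ∑ i, c i)
      (ae_of_all _ fun a ↦ ?_)
    rw [norm_eq_abs]
    linarith [hg.abs_sub_le_sum (f a) (f a₀), abs_sub_abs_le_abs_sub (g (f a)) (g (f a₀))]

lemma integral {α : Type*} [MeasurableSpace α] {μ : Measure α} [IsProbabilityMeasure μ]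
    {G : (∀ i, Z i) → α → ℝ} (hG : ∀ a, HasBoundedDifferences (fun S ↦ G S a) c)
    (hG_int : ∀ S, Integrable (G S) μ) :
    HasBoundedDifferences (fun S ↦ ∫ a, G S a ∂μ) c := by
  intro i S T hST
  rw [← integral_sub (hG_int S) (hG_int T)]
  simpa using norm_integral_le_of_norm_le_const (μ := μ) (f := fun a ↦ G S a - G T a)
    (ae_of_all _ fun a ↦ hG a i S T hST)

end HasBoundedDifferences

/-- McDiarmid's inequality, in its sub-Gaussian form, for all families of probability spaces indexed
by `ι`. It is a definition because it is what the induction on the finite type `ι` proves. -/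
def McDiarmidBound (ι : Type*) [Fintype ι] : Prop :=
  ∀ (Z : ι → Type u) [∀ i, MeasurableSpace (Z i)] (ν : ∀ i, Measure (Z i))
    [∀ i, IsProbabilityMeasure (ν i)] (g : (∀ i, Z i) → ℝ) (c : ι → ℝ),
    HasBoundedDifferences g c → Measurable g →
    HasSubgaussianMGF (fun S ↦ g S - ∫ T, g T ∂Measure.pi ν) (∑ i, (‖c i‖₊ / 2) ^ 2)
      (Measure.pi ν)

namespace McDiarmidBound

lemma of_equiv {α β : Type*} [Fintype α] [Fintype β] (e : α ≃ β) (h : McDiarmidBound.{u} α) :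
    McDiarmidBound.{u} β := by
  intro Z _ ν _ g c hg hg_meas
  have reindex := measurePreserving_piCongrLeft ν e
  have reindexed := h _ (fun a ↦ ν (e a)) _ _ (hg.comp_piCongrLeft e)
    (hg_meas.comp reindex.measurable)
  convert hasSubgaussianMGF_comp_of_measurePreserving reindex.symm reindexed using 1
  · rw [← reindex.integral_comp' (g := g)]
    ext S
    exact congrArg (fun T ↦ g T - _) ((MeasurableEquiv.piCongrLeft Z e).apply_symm_apply S).symm
  · exact (e.sum_comp fun i ↦ (‖c i‖₊ / 2) ^ 2).symm

lemma of_isEmpty (ι : Type*) [Fintype ι] [IsEmpty ι] : McDiarmidBound.{u} ι := by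
  intro Z _ ν _ g c _ _
  have g_const (S) : g S = g default := congrArg g (Subsingleton.elim _ _)
  simp [g_const]

-- Integrating out the coordinate `none` gives `h`, and `g - E g` is the sum of `h - E h`, to which
-- the bound for `ι` applies, and of `g - h`, which is bounded and centered given the others.
lemma option {ι : Type*} [Fintype ι] (ih : McDiarmidBound.{u} ι) :
    McDiarmidBound.{u} (Option ι) := by
  intro Z _ ν _ g c hg hg_meas
  let e := MeasurableEquiv.piOptionEquivProd Z
  have e_symm : MeasurePreserving e.symm
      ((Measure.pi fun i ↦ ν (some i)).prod (ν none)) (Measure.pi ν) :=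
    ⟨e.symm.measurable, Measure.pi_map_piOptionEquivProd ν⟩
  have g_meas : Measurable fun p ↦ g (e.symm p) := hg_meas.comp e.symm.measurable
  let h : (∀ i, Z (some i)) → ℝ := fun w ↦ ∫ z, g (e.symm (w, z)) ∂ν none
  have h_meas : Measurable h :=
    (g_meas.stronglyMeasurable.integral_prod_right (ν := ν none)).measurable
  have oscillation (w) : ∀ z z', |g (e.symm (w, z)) - g (e.symm (w, z'))| ≤ c none := by
    refine fun z z' ↦ hg none _ _ fun j hj ↦ ?_
    obtain ⟨i, rfl⟩ := Option.ne_none_iff_exists'.1 hj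
    rfl
  have h_diff : HasBoundedDifferences h fun i ↦ c (some i) := by
    refine .integral (fun z i w w' hw ↦ hg (some i) _ _ ?_) fun w ↦ ?_
    · rintro (_ | j) hj
      · rfl
      · exact hw j fun hji ↦ hj (congrArg some hji)
    · exact hg.integrable_comp hg_meas (e.symm.measurable.comp measurable_prodMk_left)
  have integral_h : ∫ T, g T ∂Measure.pi ν = ∫ w, h w ∂Measure.pi fun i ↦ ν (some i) := by
    rw [← e_symm.integral_comp' (g := g)]
    exact integral_prod _ (hg.integrable_comp hg_meas e.symm.measurable)
  have centered_section (w) : HasSubgaussianMGF (fun z ↦ g (e.symm (w, z)) - h w)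
      ((‖c none‖₊ / 2) ^ 2) (ν none) :=
    hasSubgaussianMGF_sub_integral_of_abs_sub_le
      (g_meas.comp measurable_prodMk_left).aemeasurable (oscillation w)
  have sum_prod := hasSubgaussianMGF_add_prod (ih _ (fun i ↦ ν (some i)) h _ h_diff h_meas)
    (Y := fun p ↦ g (e.symm p) - h p.1)
    (g_meas.sub (h_meas.comp measurable_fst)).aestronglyMeasurable centered_section
  rw [Fintype.sum_option, add_comm, integral_h]
  convert hasSubgaussianMGF_comp_of_measurePreserving e_symm.symm sum_prod using 1
  ext S
  simp [h]

end McDiarmidBound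

theorem mcDiarmidBound (ι : Type*) [Fintype ι] : McDiarmidBound.{u} ι :=
  Fintype.induction_empty_option (P := fun ι _ ↦ McDiarmidBound.{u} ι)
    (fun _ _ _ e h ↦ letI := Fintype.ofEquiv _ e.symm; h.of_equiv e) (.of_isEmpty _)
    (fun _ _ h ↦ h.option) ι

theorem HasBoundedDifferences.measure_ge_le {ι : Type*} [Fintype ι] {Z : ι → Type*}
    [∀ i, MeasurableSpace (Z i)] (ν : ∀ i, Measure (Z i)) [∀ i, IsProbabilityMeasure (ν i)]
    {g : (∀ i, Z i) → ℝ} {c : ι → ℝ} (hg : HasBoundedDifferences g c) (hg_meas : Measurable g)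
    {t : ℝ} (ht : 0 ≤ t) :
    (Measure.pi ν).real {S | ∫ T, g T ∂Measure.pi ν + t ≤ g S} ≤
      exp (-2 * t ^ 2 / ∑ i, c i ^ 2) := by
  have := (mcDiarmidBound ι Z ν g c hg hg_meas).measure_ge_le ht
  simp only [le_sub_iff_add_le'] at this
  refine this.trans_eq ?_
  push_cast
  simp only [norm_eq_abs, div_pow, sq_abs, ← Finset.sum_div]
  congr 1
  ring

end McDiarmid

section SupAverage

open scoped BigOperators

lemma abs_expect_le_of_forall_abs_le {ι : Type*} [Fintype ι] [Nonempty ι] {u : ι → ℝ} {B : ℝ}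
    (hu : ∀ i, |u i| ≤ B) : |𝔼 i, u i| ≤ B :=
  (Finset.abs_expect_le _ _).trans (Finset.expect_le Finset.univ_nonempty fun i _ ↦ hu i)

lemma measurable_expect {ι α : Type*} [Fintype ι] [MeasurableSpace α] {u : ι → α → ℝ}
    (hu : ∀ i, Measurable (u i)) : Measurable fun a ↦ 𝔼 i, u i a := by
  simp only [Fintype.expect_eq_sum_div_card]
  fun_prop

lemma integral_expect {ι α : Type*} [Fintype ι] [MeasurableSpace α] {μ : Measure α}
    {u : ι → α → ℝ} (hu : ∀ i, Integrable (u i) μ) : ∫ a, 𝔼 i, u i a ∂μ = 𝔼 i, ∫ a, u i a ∂μ := by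
  simp only [Fintype.expect_eq_sum_div_card, integral_div, integral_finsetSum _ fun i _ ↦ hu i]

lemma integrable_expect {ι α : Type*} [Fintype ι] [MeasurableSpace α] {μ : Measure α}
    {u : ι → α → ℝ} (hu : ∀ i, Integrable (u i) μ) : Integrable (fun a ↦ 𝔼 i, u i a) μ := by
  simp only [Fintype.expect_eq_sum_div_card]
  exact (integrable_finsetSum _ fun i _ ↦ hu i).div_const _

lemma HasBoundedDifferences.expect {τ ι : Type*} [Fintype τ] [Nonempty τ] {Z : ι → Type*}
    {G : τ → (∀ i, Z i) → ℝ} {c : ι → ℝ} (hG : ∀ t, HasBoundedDifferences (G t) c) :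
    HasBoundedDifferences (fun S ↦ 𝔼 t, G t S) c := fun i S T hST ↦ by
  rw [← Finset.expect_sub_distrib]
  exact abs_expect_le_of_forall_abs_le fun t ↦ hG t i S T hST

lemma abs_ciSup_sub_ciSup_le {κ : Type*} [Nonempty κ] {u v : κ → ℝ}
    (hu : BddAbove (Set.range u)) (hv : BddAbove (Set.range v)) {c : ℝ}
    (huv : ∀ f, |u f - v f| ≤ c) : |(⨆ f, u f) - ⨆ f, v f| ≤ c := by
  refine abs_sub_le_iff.2 ⟨?_, ?_⟩ <;> rw [sub_le_iff_le_add] <;> refine ciSup_le fun f ↦ ?_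
  · linarith [(abs_le.1 (huv f)).2, le_ciSup hv f]
  · linarith [(abs_le.1 (huv f)).1, le_ciSup hu f]

/-- The supremum over a class `κ` of the averages of `ψ f k` over the sample `S`. Both the uniform
deviation and the signed averages in the Rademacher complexity have this form. -/
def supAverage {κ ι Z : Type*} [Fintype ι] (ψ : κ → ι → Z → ℝ) (S : ι → Z) : ℝ :=
  ⨆ f, 𝔼 k, ψ f k (S k)

variable {κ ι Z : Type*} [Fintype ι] {ψ : κ → ι → Z → ℝ} {B c : ℝ}

lemma measurable_supAverage [Countable κ] [MeasurableSpace Z] (hψ : ∀ f k, Measurable (ψ f k)) :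
    Measurable (supAverage ψ) :=
  .iSup fun f ↦ measurable_expect fun k ↦ (hψ f k).comp (measurable_pi_apply k)

variable [Nonempty ι]

lemma bddAbove_range_average (hB : ∀ f k z, |ψ f k z| ≤ B) (S : ι → Z) :
    BddAbove (Set.range fun f ↦ 𝔼 k, ψ f k (S k)) := by
  refine ⟨B, ?_⟩
  rintro _ ⟨f, rfl⟩
  exact (le_abs_self _).trans (abs_expect_le_of_forall_abs_le fun k ↦ hB f k (S k))

lemma average_le_supAverage (hB : ∀ f k z, |ψ f k z| ≤ B) (S : ι → Z) (f : κ) :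
    𝔼 k, ψ f k (S k) ≤ supAverage ψ S :=
  le_ciSup (bddAbove_range_average hB S) f

variable [Nonempty κ]

lemma abs_supAverage_le (hB : ∀ f k z, |ψ f k z| ≤ B) (S : ι → Z) : |supAverage ψ S| ≤ B := by
  simpa [supAverage] using abs_ciSup_sub_ciSup_le (v := fun _ ↦ 0) (bddAbove_range_average hB S)
    ⟨0, by simp [upperBounds]⟩ fun f ↦ by
      simpa using abs_expect_le_of_forall_abs_le fun k ↦ hB f k (S k)

lemma integrable_supAverage_comp [Countable κ] [MeasurableSpace Z] {α : Type*} [MeasurableSpace α]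
    {μ : Measure α} [IsFiniteMeasure μ] {s : α → ι → Z} (hψ : ∀ f k, Measurable (ψ f k))
    (hB : ∀ f k z, |ψ f k z| ≤ B) (hs : Measurable s) :
    Integrable (fun a ↦ supAverage ψ (s a)) μ :=
  .of_bound ((measurable_supAverage hψ).comp hs).aestronglyMeasurable B
    (ae_of_all _ fun a ↦ abs_supAverage_le hB (s a))

lemma hasBoundedDifferences_supAverage (hB : ∀ f k z, |ψ f k z| ≤ B)
    (hc : ∀ f k z w, |ψ f k z - ψ f k w| ≤ c) :
    HasBoundedDifferences (supAverage ψ) fun _ ↦ c / Fintype.card ι := by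
  intro i S T hST
  refine abs_ciSup_sub_ciSup_le (bddAbove_range_average hB S) (bddAbove_range_average hB T)
    fun f ↦ ?_
  have average_diff : 𝔼 k, ψ f k (S k) - 𝔼 k, ψ f k (T k) =
      (ψ f i (S i) - ψ f i (T i)) / Fintype.card ι := by
    rw [← Finset.expect_sub_distrib, Fintype.expect_eq_sum_div_card, Fintype.sum_eq_single i]
    exact fun k hk ↦ by rw [hST k hk, sub_self]
  rw [average_diff, abs_div, Nat.abs_cast]
  exact div_le_div_of_nonneg_right (hc f i _ _) (Nat.cast_nonneg _)

end SupAverage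

section Rademacher

open scoped BigOperators

lemma integral_comp_of_measurePreserving {α β : Type*} [MeasurableSpace α] [MeasurableSpace β]
    {μ : Measure α} {ν : Measure β} {f : α → β} (hf : MeasurePreserving f μ ν) {g : β → ℝ}
    (hg : Measurable g) : ∫ a, g (f a) ∂μ = ∫ b, g b ∂ν := by
  rw [← hf.map_eq, integral_map hf.aemeasurable hg.aestronglyMeasurable]

lemma abs_integral_sub_le {α : Type*} [MeasurableSpace α] {μ : Measure α} [IsProbabilityMeasure μ]
    {u : α → ℝ} {B : ℝ} (hu : ∀ a, |u a| ≤ B) (a : α) : |∫ b, u b ∂μ - u a| ≤ B + B := by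
  refine (abs_sub _ _).trans (add_le_add ?_ (hu a))
  simpa using norm_integral_le_of_norm_le_const (μ := μ) (f := u) (ae_of_all _ hu)

lemma abs_sgn (b : Bool) : |sgn b| = 1 := by cases b <;> simp [sgn]

lemma sgn_not (b : Bool) : sgn (!b) = -sgn b := by cases b <;> simp [sgn]

lemma abs_sgn_mul (b : Bool) (x : ℝ) : |sgn b * x| = |x| := by rw [abs_mul, abs_sgn, one_mul]

/-- The supremum over `f` of the averages of `φ f` over the sample `S` with the signs `σ`. -/
def signedSup {κ ι Z : Type*} [Fintype ι] (φ : κ → Z → ℝ) (σ : ι → Bool) : (ι → Z) → ℝ :=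
  supAverage fun f k z ↦ sgn (σ k) * φ f z

/-- Empirical Rademacher complexity of a family `φ` of real functions on the sample `S`: the average
of `signedSup` over all sign vectors. -/
def rademacherComplexity {κ ι Z : Type*} [Fintype ι] [DecidableEq ι] (φ : κ → Z → ℝ)
    (S : ι → Z) : ℝ :=
  𝔼 σ : ι → Bool, signedSup φ σ S

/-- The one-sided uniform deviation of the sample averages of the functions `φ f` from their
expectations, when the `k`-th sample point has law `ν k`. -/
def uniformDeviation {κ ι Z : Type*} [Fintype ι] [MeasurableSpace Z] (φ : κ → Z → ℝ)
    (ν : ι → Measure Z) : (ι → Z) → ℝ :=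
  supAverage fun f k z ↦ ∫ w, φ f w ∂ν k - φ f z

/-- The differences of the values of `φ` on a sample point and on a ghost copy of it. -/
def ghostDifference {κ Z : Type*} (φ : κ → Z → ℝ) (f : κ) (w : Z × Z) : ℝ := φ f w.1 - φ f w.2

lemma measurable_ghostDifference {κ Z : Type*} [MeasurableSpace Z] {φ : κ → Z → ℝ}
    (hφ_meas : ∀ f, Measurable (φ f)) (f : κ) : Measurable (ghostDifference φ f) :=
  ((hφ_meas f).comp measurable_fst).sub ((hφ_meas f).comp measurable_snd)

lemma abs_ghostDifference_le {κ Z : Type*} {φ : κ → Z → ℝ} {B : ℝ} (hφ : ∀ f z, |φ f z| ≤ B)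
    (f : κ) (w : Z × Z) : |ghostDifference φ f w| ≤ B + B :=
  (abs_sub _ _).trans (add_le_add (hφ f _) (hφ f _))

lemma signedSup_ghostDifference_swap {κ ι Z : Type*} [Fintype ι] (φ : κ → Z → ℝ) (σ : ι → Bool)
    (W : ι → Z × Z) :
    signedSup (ghostDifference φ) (fun _ ↦ true) (fun k ↦ (if σ k then id else Prod.swap) (W k)) =
      signedSup (ghostDifference φ) σ W := by
  refine iSup_congr fun f ↦ Finset.expect_congr rfl fun k _ ↦ ?_
  by_cases hk : σ k <;> simp [ghostDifference, sgn, hk]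

variable {κ ι Z : Type*} [Fintype ι] {φ : κ → Z → ℝ} {B a b : ℝ}

lemma signedSup_ghostDifference_le [Nonempty κ] [Nonempty ι] (hφ : ∀ f z, |φ f z| ≤ B)
    (σ : ι → Bool) (W : ι → Z × Z) :
    signedSup (ghostDifference φ) σ W ≤
      signedSup φ σ (fun k ↦ (W k).1) + signedSup φ (fun k ↦ !σ k) (fun k ↦ (W k).2) := by
  refine ciSup_le fun f ↦ ?_
  calc 𝔼 k, sgn (σ k) * ghostDifference φ f (W k)
      = 𝔼 k, sgn (σ k) * φ f (W k).1 + 𝔼 k, sgn (!σ k) * φ f (W k).2 := by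
        rw [← Finset.expect_add_distrib]
        refine Finset.expect_congr rfl fun k _ ↦ ?_
        rw [sgn_not, ghostDifference]
        ring
    _ ≤ _ := add_le_add (average_le_supAverage (fun f k z ↦ (abs_sgn_mul (σ k) _).trans_le (hφ f z))
          (fun k ↦ (W k).1) f)
        (average_le_supAverage (fun f k z ↦ (abs_sgn_mul (!σ k) _).trans_le (hφ f z))
           (fun k ↦ (W k).2) f)

lemma hasBoundedDifferences_rademacherComplexity [Nonempty κ] [Nonempty ι]
    [DecidableEq ι] (hφ : ∀ f z, φ f z ∈ Set.Icc a b) :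
    HasBoundedDifferences (ι := ι) (rademacherComplexity φ) fun _ ↦ (b - a) / Fintype.card ι := by
  refine .expect fun σ ↦ hasBoundedDifferences_supAverage
    (fun f k z ↦ (abs_sgn_mul (σ k) _).trans_le (abs_le_max_abs_abs (hφ f z).1 (hφ f z).2))
    fun f k z w ↦ ?_
  rw [← mul_sub, abs_sgn_mul]
  exact Real.dist_le_of_mem_Icc (hφ f z) (hφ f w)

variable [MeasurableSpace Z]

lemma hasBoundedDifferences_uniformDeviation [Nonempty κ] [Nonempty ι]
    (ν : ι → Measure Z) [∀ k, IsProbabilityMeasure (ν k)] (hφ : ∀ f z, φ f z ∈ Set.Icc a b) :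
    HasBoundedDifferences (uniformDeviation φ ν) fun _ ↦ (b - a) / Fintype.card ι := by
  refine hasBoundedDifferences_supAverage
    (fun f _ ↦ abs_integral_sub_le fun z ↦ abs_le_max_abs_abs (hφ f z).1 (hφ f z).2)
    fun f k z w ↦ ?_
  rw [sub_sub_sub_cancel_left]
  exact Real.dist_le_of_mem_Icc (hφ f w) (hφ f z)

lemma measurable_signedSup [Countable κ] (hφ_meas : ∀ f, Measurable (φ f)) (σ : ι → Bool) :
    Measurable (signedSup φ σ) :=
  measurable_supAverage fun f k ↦ (hφ_meas f).const_mul (sgn (σ k))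

variable [Countable κ] (ν : ι → Measure Z) [∀ k, IsProbabilityMeasure (ν k)]

lemma integral_signedSup_ghostDifference (hφ_meas : ∀ f, Measurable (φ f)) (σ : ι → Bool) :
    ∫ W, signedSup (ghostDifference φ) σ W ∂Measure.pi (fun k ↦ (ν k).prod (ν k)) =
      ∫ W, signedSup (ghostDifference φ) (fun _ ↦ true) W
        ∂Measure.pi fun k ↦ (ν k).prod (ν k) := by
  have swap : MeasurePreserving
      (fun (W : ι → Z × Z) k ↦ (if σ k then id else Prod.swap : Z × Z → Z × Z) (W k))
      (Measure.pi fun k ↦ (ν k).prod (ν k)) (Measure.pi fun k ↦ (ν k).prod (ν k)) := by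
    refine measurePreserving_pi _ _ (f := fun k ↦ if σ k then id else Prod.swap) fun k ↦ ?_
    split_ifs
    · exact .id _
    · exact Measure.measurePreserving_swap
  simp only [← signedSup_ghostDifference_swap φ σ]
  exact integral_comp_of_measurePreserving swap
    (measurable_signedSup (measurable_ghostDifference hφ_meas) _)

variable [Nonempty κ] [Nonempty ι]

lemma integrable_signedSup_comp {α : Type*} [MeasurableSpace α] {μ : Measure α} [IsFiniteMeasure μ]
    {s : α → ι → Z} (hφ_meas : ∀ f, Measurable (φ f)) (hφ : ∀ f z, |φ f z| ≤ B) (σ : ι → Bool)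
    (hs : Measurable s) : Integrable (fun a ↦ signedSup φ σ (s a)) μ :=
  integrable_supAverage_comp (fun f k ↦ (hφ_meas f).const_mul (sgn (σ k)))
    (fun f k z ↦ (abs_sgn_mul (σ k) _).trans_le (hφ f z)) hs

lemma uniformDeviation_le_integral_ghost (hφ_meas : ∀ f, Measurable (φ f))
    (hφ : ∀ f z, |φ f z| ≤ B) (S : ι → Z) :
    uniformDeviation φ ν S ≤
      ∫ T, signedSup (ghostDifference φ) (fun _ ↦ true) (fun k ↦ (T k, S k)) ∂Measure.pi ν := by
  have integrable_φ (f : κ) (k : ι) : Integrable (φ f) (ν k) :=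
    .of_bound (hφ_meas f).aestronglyMeasurable B (ae_of_all _ (hφ f))
  have integrable_ghost (f : κ) (k : ι) :
      Integrable (fun T : ι → Z ↦ ghostDifference φ f (T k, S k)) (Measure.pi ν) :=
    (integrable_comp_eval (integrable_φ f k)).sub (integrable_const (φ f (S k)))
  refine ciSup_le fun f ↦ ?_
  calc 𝔼 k, (∫ w, φ f w ∂ν k - φ f (S k))
      = 𝔼 k, ∫ T, ghostDifference φ f (T k, S k) ∂Measure.pi ν := by
        refine Finset.expect_congr rfl fun k _ ↦ ?_
        simp only [ghostDifference]
        rw [integral_sub (integrable_comp_eval (integrable_φ f k)) (integrable_const _),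
          integral_comp_eval (hφ_meas f).aestronglyMeasurable]
        simp
    _ = ∫ T, 𝔼 k, ghostDifference φ f (T k, S k) ∂Measure.pi ν :=
        (integral_expect (integrable_ghost f)).symm
    _ ≤ ∫ T, signedSup (ghostDifference φ) (fun _ ↦ true) (fun k ↦ (T k, S k)) ∂Measure.pi ν := by
        refine integral_mono (integrable_expect (integrable_ghost f))
          (integrable_signedSup_comp (measurable_ghostDifference hφ_meas)
            (abs_ghostDifference_le hφ) _ (by fun_prop)) fun T ↦ ?_
        simpa [signedSup, sgn] using average_le_supAverage
          (fun f _ w ↦ (abs_sgn_mul true _).trans_le (abs_ghostDifference_le hφ f w))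
          (fun k : ι ↦ (T k, S k)) f

lemma integral_uniformDeviation_le_integral_ghost (hφ_meas : ∀ f, Measurable (φ f))
    (hφ : ∀ f z, |φ f z| ≤ B) :
    ∫ S, uniformDeviation φ ν S ∂Measure.pi ν ≤
      ∫ W, signedSup (ghostDifference φ) (fun _ ↦ true) W
        ∂Measure.pi fun k ↦ (ν k).prod (ν k) := by
  have unzip := (measurePreserving_arrowProdEquivProdArrow Z Z ι ν ν).symm
  have integrable_ghost : Integrable
      (fun p ↦ signedSup (ghostDifference φ) (fun _ ↦ true)
        ((MeasurableEquiv.arrowProdEquivProdArrow Z Z ι).symm p))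
      ((Measure.pi ν).prod (Measure.pi ν)) :=
    integrable_signedSup_comp (measurable_ghostDifference hφ_meas) (abs_ghostDifference_le hφ) _
      unzip.measurable
  rw [← unzip.integral_comp', integral_prod_symm _ integrable_ghost]
  exact integral_mono
    (integrable_supAverage_comp (fun f k ↦ (hφ_meas f).const_sub _)
      (fun f _ ↦ abs_integral_sub_le (hφ f)) measurable_id)
    integrable_ghost.integral_prod_right (uniformDeviation_le_integral_ghost ν hφ_meas hφ)

lemma integral_signedSup_ghostDifference_le (hφ_meas : ∀ f, Measurable (φ f))
    (hφ : ∀ f z, |φ f z| ≤ B) (σ : ι → Bool) :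
    ∫ W, signedSup (ghostDifference φ) σ W ∂Measure.pi (fun k ↦ (ν k).prod (ν k)) ≤
      ∫ S, signedSup φ σ S ∂Measure.pi ν + ∫ S, signedSup φ (fun k ↦ !σ k) S ∂Measure.pi ν := by
  have fst : MeasurePreserving (fun (W : ι → Z × Z) k ↦ (W k).1)
      (Measure.pi fun k ↦ (ν k).prod (ν k)) (Measure.pi ν) :=
    measurePreserving_pi _ _ fun _ ↦ measurePreserving_fst
  have snd : MeasurePreserving (fun (W : ι → Z × Z) k ↦ (W k).2)
      (Measure.pi fun k ↦ (ν k).prod (ν k)) (Measure.pi ν) :=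
    measurePreserving_pi _ _ fun _ ↦ measurePreserving_snd
  have integrable_fst := integrable_signedSup_comp hφ_meas hφ σ fst.measurable
    (μ := Measure.pi fun k ↦ (ν k).prod (ν k))
  have integrable_snd := integrable_signedSup_comp hφ_meas hφ (fun k ↦ !σ k) snd.measurable
    (μ := Measure.pi fun k ↦ (ν k).prod (ν k))
  rw [← integral_comp_of_measurePreserving fst (measurable_signedSup hφ_meas _),
    ← integral_comp_of_measurePreserving snd (measurable_signedSup hφ_meas _),
    ← integral_add integrable_fst integrable_snd]
  exact integral_mono (integrable_signedSup_comp (measurable_ghostDifference hφ_meas)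
    (abs_ghostDifference_le hφ) σ measurable_id) (integrable_fst.add integrable_snd)
    (signedSup_ghostDifference_le hφ σ)

lemma integral_uniformDeviation_le [DecidableEq ι] (hφ_meas : ∀ f, Measurable (φ f))
    (hφ : ∀ f z, |φ f z| ≤ B) :
    ∫ S, uniformDeviation φ ν S ∂Measure.pi ν ≤
      2 * ∫ S, rademacherComplexity φ S ∂Measure.pi ν := by
  have integral_rademacher : ∫ S, rademacherComplexity φ S ∂Measure.pi ν =
      𝔼 σ : ι → Bool, ∫ S, signedSup φ σ S ∂Measure.pi ν :=
    integral_expect fun σ ↦ integrable_signedSup_comp hφ_meas hφ σ measurable_id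
  have expect_not : 𝔼 σ : ι → Bool, ∫ S, signedSup φ (fun k ↦ !σ k) S ∂Measure.pi ν =
      𝔼 σ : ι → Bool, ∫ S, signedSup φ σ S ∂Measure.pi ν :=
    Fintype.expect_equiv (.arrowCongr (.refl ι) Equiv.boolNot) _ _ fun σ ↦ rfl
  calc ∫ S, uniformDeviation φ ν S ∂Measure.pi ν
      = 𝔼 _σ : ι → Bool, ∫ S, uniformDeviation φ ν S ∂Measure.pi ν :=
        (Fintype.expect_const _).symm
    _ ≤ 𝔼 σ : ι → Bool, (∫ S, signedSup φ σ S ∂Measure.pi ν +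
          ∫ S, signedSup φ (fun k ↦ !σ k) S ∂Measure.pi ν) :=
        Finset.expect_le_expect fun σ _ ↦
          (integral_uniformDeviation_le_integral_ghost ν hφ_meas hφ).trans <|
          (integral_signedSup_ghostDifference ν hφ_meas σ).symm.trans_le
            (integral_signedSup_ghostDifference_le ν hφ_meas hφ σ)
    _ = 2 * ∫ S, rademacherComplexity φ S ∂Measure.pi ν := by
        rw [Finset.expect_add_distrib, expect_not, integral_rademacher, two_mul]

theorem measureReal_uniformDeviation_ge_le [DecidableEq ι] (hφ_meas : ∀ f, Measurable (φ f))
    (hφ : ∀ f z, φ f z ∈ Set.Icc a b) {t : ℝ} (ht : 0 ≤ t) :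
    (Measure.pi ν).real {S | 2 * rademacherComplexity φ S + t ≤ uniformDeviation φ ν S} ≤
      exp (-2 * t ^ 2 * Fintype.card ι / (3 * (b - a)) ^ 2) := by
  have hφ_abs (f : κ) (z : Z) : |φ f z| ≤ max |a| |b| :=
    abs_le_max_abs_abs (hφ f z).1 (hφ f z).2
  have dev_meas : Measurable (uniformDeviation φ ν) :=
    measurable_supAverage fun f k ↦ (hφ_meas f).const_sub _
  have rad_meas : Measurable (rademacherComplexity (ι := ι) φ) :=
    measurable_expect fun σ ↦ measurable_signedSup hφ_meas σ
  have dev_diff := hasBoundedDifferences_uniformDeviation ν hφ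
  have rad_diff := (hasBoundedDifferences_rademacherComplexity (ι := ι) hφ).const_mul 2
  let excess : (ι → Z) → ℝ := fun S ↦ uniformDeviation φ ν S - 2 * rademacherComplexity φ S
  have integral_excess : ∫ S, excess S ∂Measure.pi ν ≤ 0 := by
    have dev_int : Integrable (uniformDeviation φ ν) (Measure.pi ν) :=
      dev_diff.integrable_comp dev_meas measurable_id
    have rad_int : Integrable (fun S ↦ 2 * rademacherComplexity φ S) (Measure.pi ν) :=
      rad_diff.integrable_comp (rad_meas.const_mul 2) measurable_id
    rw [integral_sub dev_int rad_int, integral_const_mul]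
    exact sub_nonpos.2 (integral_uniformDeviation_le ν hφ_meas hφ_abs)
  calc (Measure.pi ν).real {S | 2 * rademacherComplexity φ S + t ≤ uniformDeviation φ ν S}
      ≤ (Measure.pi ν).real {S | ∫ T, excess T ∂Measure.pi ν + t ≤ excess S} := by
        refine measureReal_mono fun S hS ↦ ?_
        simp only [Set.mem_ofPred_eq, excess] at hS integral_excess ⊢
        linarith
    _ ≤ _ := (dev_diff.sub rad_diff).measure_ge_le ν (dev_meas.sub (rad_meas.const_mul 2)) ht
    _ = exp (-2 * t ^ 2 * Fintype.card ι / (3 * (b - a)) ^ 2) := by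
        congr 1
        have : (Fintype.card ι : ℝ) ≠ 0 := by simp
        simp only [abs_two, Finset.sum_const, Finset.card_univ, nsmul_eq_mul]
        field_simp
        ring

end Rademacher

section RiskBound

open scoped BigOperators

lemma ofReal_one_sub_le_measure {α : Type*} [MeasurableSpace α] {μ : Measure α}
    [IsProbabilityMeasure μ] {s : Set α} {δ : ℝ} (hs : μ.real sᶜ ≤ δ) :
    ENNReal.ofReal (1 - δ) ≤ μ s := by
  have hδ : 0 ≤ δ := measureReal_nonneg.trans hs
  rw [ENNReal.ofReal_sub _ hδ, ENNReal.ofReal_one, tsub_le_iff_right]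
  calc 1 = μ (s ∪ sᶜ) := by rw [Set.union_compl_self, measure_univ]
    _ ≤ μ s + μ sᶜ := measure_union_le _ _
    _ ≤ μ s + ENNReal.ofReal δ := by
        gcongr
        rw [← ofReal_measureReal]
        exact ENNReal.ofReal_le_ofReal hs

theorem ofReal_one_sub_le_measure_expect_integral_le {κ ι Z : Type*} [Countable κ] [Fintype ι]
    [Nonempty ι] [DecidableEq ι] [MeasurableSpace Z] (φ : κ → Z → ℝ)
    (hφ_meas : ∀ f, Measurable (φ f)) (hφ : ∀ f z, φ f z ∈ Set.Icc (0 : ℝ) 1)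
    (ν : ι → Measure Z) [∀ k, IsProbabilityMeasure (ν k)] {δ : ℝ} (hδ0 : 0 < δ) (hδ1 : δ ≤ 1) :
    ENNReal.ofReal (1 - δ) ≤ Measure.pi ν {S | ∀ f, 𝔼 k, ∫ z, φ f z ∂ν k ≤
      𝔼 k, φ f (S k) + 2 * rademacherComplexity φ S +
        3 * √(log (1 / δ) / (2 * Fintype.card ι))} := by
  rcases isEmpty_or_nonempty κ with _ | _
  · simp [hδ0.le]
  set t := 3 * √(log (1 / δ) / (2 * Fintype.card ι)) with ht
  have tail := measureReal_uniformDeviation_ge_le ν hφ_meas hφ (t := t) (by positivity)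
  have exponent : -2 * t ^ 2 * Fintype.card ι / (3 * (1 - 0)) ^ 2 = log δ := by
    have : 0 ≤ log (1 / δ) := log_nonneg (one_le_one_div hδ0 hδ1)
    rw [ht, mul_pow, sq_sqrt (by positivity), one_div, log_inv]
    field_simp
    ring
  rw [exponent, exp_log hδ0] at tail
  refine ofReal_one_sub_le_measure (le_trans (measureReal_mono fun S hS ↦ ?_) tail)
  simp only [Set.mem_compl_iff, Set.mem_ofPred_eq, not_forall, not_le] at hS ⊢
  obtain ⟨f, hf⟩ := hS
  have le_dev : 𝔼 k, (∫ z, φ f z ∂ν k - φ f (S k)) ≤ uniformDeviation φ ν S :=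
    average_le_supAverage (fun f k ↦ abs_integral_sub_le (μ := ν k) fun z ↦
      abs_le_max_abs_abs (hφ f z).1 (hφ f z).2) S f
  rw [Finset.expect_sub_distrib] at le_dev
  linarith

-- In `ℝ` the right side also takes the value `sSup ∅ = 0` at every `f ∉ F`, so it can be larger.
lemma ciSup_subtype_le_biSup {α : Type*} {F : Set α} {u : α → ℝ} {B : ℝ}
    (hu : ∀ f ∈ F, u f ≤ B) : ⨆ f : F, u f ≤ ⨆ f ∈ F, u f := by
  rcases F.eq_empty_or_nonempty with rfl | hF
  · simp
  have bddAbove : BddAbove (Set.range fun f ↦ ⨆ _ : f ∈ F, u f) := by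
    refine ⟨max B 0, ?_⟩
    rintro _ ⟨f, rfl⟩
    exact Real.iSup_le (fun hf ↦ (hu f hf).trans (le_max_left _ _)) (le_max_right _ _)
  have := hF.to_subtype
  refine ciSup_le fun f ↦ le_ciSup_of_le bddAbove f ?_
  rw [ciSup_pos f.2]

variable {X : Type*} [MeasurableSpace X] {ℓ : Ysp → Ysp → ℝ} {F : Set (X → Ysp)}

lemma rademacherComplexity_le_rad {ι : Type*} [Fintype ι] [Nonempty ι] [DecidableEq ι]
    (hℓ : ∀ y y', ℓ y y' ∈ Set.Icc (0 : ℝ) 1) (S : ι → X × Ysp) :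
    rademacherComplexity (fun (f : F) z ↦ ℓ (f.1 z.1) z.2) S ≤ rad ℓ F S := by
  have abs_le (σ : ι → Bool) (f : X → Ysp) (k : ι) :
      |sgn (σ k) * ℓ (f (S k).1) (S k).2| ≤ 1 := by
    rw [abs_sgn_mul, abs_of_nonneg (hℓ _ _).1]
    exact (hℓ _ _).2
  simp only [rademacherComplexity, rad, signedSup, supAverage, Fintype.expect_eq_sum_div_card,
    Fintype.card_fun, Fintype.card_bool, Nat.cast_pow, Nat.cast_ofNat, ← div_eq_inv_mul]
  gcongr with σ
  refine ciSup_subtype_le_biSup (B := 1)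
    (u := fun f : X → Ysp ↦ (∑ k, sgn (σ k) * ℓ (f (S k).1) (S k).2) / Fintype.card ι) fun f _ ↦ ?_
  rw [← Fintype.expect_eq_sum_div_card]
  exact (le_abs_self _).trans (abs_expect_le_of_forall_abs_le (abs_le σ f))

theorem statement1_general {ι : Type*} [Fintype ι] [Nonempty ι] [DecidableEq ι]
    (hℓ : ∀ y y', ℓ y y' ∈ Set.Icc (0 : ℝ) 1) (hF : F.Countable) (hF_meas : ∀ f ∈ F, Measurable f)
    (P : ι → Measure (X × Ysp)) [∀ k, IsProbabilityMeasure (P k)] {δ : ℝ} (hδ0 : 0 < δ)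
    (hδ1 : δ ≤ 1) :
    ENNReal.ofReal (1 - δ) ≤ Measure.pi P {S | ∀ f ∈ F, 𝔼 k, risk ℓ (P k) f ≤
      𝔼 k, ℓ (f (S k).1) (S k).2 + 2 * rad ℓ F S +
        3 * √(log (1 / δ) / (2 * Fintype.card ι))} := by
  have := hF.to_subtype
  have loss_meas (f : F) : Measurable fun z : X × Ysp ↦ ℓ (f.1 z.1) z.2 :=
    (Measurable.of_discrete (f := fun y : Ysp × Ysp ↦ ℓ y.1 y.2)).comp
      (((hF_meas f f.2).comp measurable_fst).prodMk measurable_snd)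
  refine (ofReal_one_sub_le_measure_expect_integral_le _ loss_meas (fun _ _ ↦ hℓ _ _) P hδ0
    hδ1).trans (measure_mono fun S hS f hf ↦ (hS ⟨f, hf⟩).trans ?_)
  gcongr
  exact rademacherComplexity_le_rad hℓ S

lemma expect_fin_prod {n m : ℕ} (u : Fin n × Fin m → ℝ) :
    𝔼 p, u p = (n : ℝ)⁻¹ * ∑ j, ((m : ℝ)⁻¹ * ∑ i, u (j, i)) := by
  simp only [← Finset.univ_product_univ, Finset.expect_product, Fintype.expect_eq_sum_div_card,
    Fintype.card_fin, div_eq_inv_mul]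

lemma expect_fin_prod_fst {n m : ℕ} [NeZero m] (u : Fin n → ℝ) :
    𝔼 p : Fin n × Fin m, u p.1 = (n : ℝ)⁻¹ * ∑ j, u j := by
  have : (m : ℝ) ≠ 0 := NeZero.ne _
  simp [expect_fin_prod, this]

end RiskBound

/-- For `n` independent (not necessarily identical) domains
`P⁽¹⁾, …, P⁽ⁿ⁾`, each providing `m` i.i.d. samples, with confidence at least `1 - δ`,
simultaneously for all `f ∈ F`:
`(1/n) ∑ⱼ L_{P⁽ʲ⁾}(f) ≤ (1/n) ∑ⱼ L̂_{P⁽ʲ⁾}(f) + 2 R_{mn}(F) + 3 √(ln(2/δ)/(2mn))`. -/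
theorem statement1 {X : Type*} [MeasurableSpace X]
    (ℓ : Ysp → Ysp → ℝ) (hℓ01 : ∀ a b, ℓ a b ∈ Set.Icc (0 : ℝ) 1)
    (hℓLip : LipschitzWith 1 fun p : Ysp × Ysp => ℓ p.1 p.2)
    (F : Set (X → Ysp)) (hFcount : F.Countable) (hFmeas : ∀ f ∈ F, Measurable f)
    (n m : ℕ) (hn : 0 < n) (hm : 0 < m)
    (P : Fin n → Measure (X × Ysp)) [∀ j, IsProbabilityMeasure (P j)]
    (δ : ℝ) (hδ0 : 0 < δ) (hδ1 : δ < 1) :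
    ENNReal.ofReal (1 - δ) ≤
      (Measure.pi fun p : Fin n × Fin m => P p.1) {S | ∀ f ∈ F,
        (n : ℝ)⁻¹ * ∑ j, risk ℓ (P j) f ≤
          (n : ℝ)⁻¹ * ∑ j, ((m : ℝ)⁻¹ * ∑ i, ℓ (f (S (j, i)).1) (S (j, i)).2)
            + 2 * rad ℓ F S
            + 3 * Real.sqrt (Real.log (2 / δ) / (2 * m * n))} := by
  have : NeZero n := ⟨hn.ne'⟩
  have : NeZero m := ⟨hm.ne'⟩
  have log_le : log (1 / δ) ≤ log (2 / δ) := by gcongr; norm_num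
  have card : 2 * (Fintype.card (Fin n × Fin m) : ℝ) = 2 * m * n := by simp; ring
  refine (statement1_general hℓ01 hFcount hFmeas (fun p : Fin n × Fin m ↦ P p.1) hδ0
    hδ1.le).trans (measure_mono fun S hS f hf ↦ ?_)
  refine (expect_fin_prod_fst _).symm.trans_le ((hS f hf).trans ?_)
  rw [expect_fin_prod, card]
  gcongr
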